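/- arXiv:math/0506272 — 2 statements merged into one kernel-verified Lean document; each statement's English description precedes it below -/
import Mathlib

section
/- Let H be a quasi-bialgebra and let A be a left H-module equipped with a k-bilinear multiplication. Define a multiplication on the vector space A⊗H by (a⊗h)(a′⊗h′) = (x¹·a)(x²h₁·a′) ⊗ x³h₂h′, where Φ⁻¹ = x¹⊗x²⊗x³. If this multiplication on A⊗H is associative, then the multiplication of A satisfies (ab)c = (X¹·a)((X²·b)(X³·c)) for all a, b, c ∈ A, where Φ = X¹⊗X²⊗X³. -/
open TensorProduct BigOperators

/-- A quasi-bialgebra in the sense of Drinfeld. -/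
structure QuasiBialgebra (k H : Type*) [Field k] [Ring H] [Algebra k H] where
  comul : H →ₐ[k] H ⊗[k] H
  counit : H →ₐ[k] k
  Phi : H ⊗[k] (H ⊗[k] H)
  PhiInv : H ⊗[k] (H ⊗[k] H)
  Phi_mul_inv : Phi * PhiInv = 1
  inv_mul_Phi : PhiInv * Phi = 1
  comul_coassoc : ∀ h : H,
    (Algebra.TensorProduct.map (AlgHom.id k H) comul) (comul h)
      = Phi * (Algebra.TensorProduct.assoc k k k H H H)
          ((Algebra.TensorProduct.map comul (AlgHom.id k H)) (comul h)) * PhiInv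
  counit_comul_right : ∀ h : H,
    (Algebra.TensorProduct.map (AlgHom.id k H) counit) (comul h) = h ⊗ₜ[k] (1 : k)
  counit_comul_left : ∀ h : H,
    (Algebra.TensorProduct.map counit (AlgHom.id k H)) (comul h) = (1 : k) ⊗ₜ[k] h
  pentagon :
    ((1 : H) ⊗ₜ[k] Phi)
      * (Algebra.TensorProduct.map (AlgHom.id k H)
          (((Algebra.TensorProduct.assoc k k k H H H).toAlgHom).comp
            (Algebra.TensorProduct.map comul (AlgHom.id k H)))) Phi
      * (Algebra.TensorProduct.map (AlgHom.id k H)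
          (Algebra.TensorProduct.map (AlgHom.id k H)
            (Algebra.TensorProduct.includeLeft : H →ₐ[k] H ⊗[k] H))) Phi
    = (Algebra.TensorProduct.map (AlgHom.id k H)
          (Algebra.TensorProduct.map (AlgHom.id k H) comul)) Phi
      * (Algebra.TensorProduct.assoc k k k H H (H ⊗[k] H))
          ((Algebra.TensorProduct.map comul (AlgHom.id k (H ⊗[k] H))) Phi)
  counit_Phi : (Algebra.TensorProduct.map (AlgHom.id k H)
      (Algebra.TensorProduct.map counit (AlgHom.id k H))) Phi = 1

/-- A quasi-Hopf algebra: a quasi-bialgebra with antipode `S` (a bijective algebra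
anti-automorphism with inverse `Sinv`) and elements `alpha`, `beta`, normalized so that
`counit alpha = counit beta = 1`.  Identities involving Sweedler components are stated
universally over all finite representations of the relevant tensors. -/
structure QuasiHopfAlgebra (k H : Type*) [Field k] [Ring H] [Algebra k H] extends
    QuasiBialgebra k H where
  alpha : H
  beta : H
  S : H →ₗ[k] H
  Sinv : H →ₗ[k] H
  S_one : S 1 = 1
  S_mul : ∀ a b : H, S (a * b) = S b * S a
  Sinv_S : ∀ h : H, Sinv (S h) = h
  S_Sinv : ∀ h : H, S (Sinv h) = h
  antipode_left : ∀ h : H, ∀ (n : ℕ) (d1 d2 : Fin n → H),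
    comul h = ∑ i, d1 i ⊗ₜ[k] d2 i →
    ∑ i, S (d1 i) * alpha * d2 i = counit h • alpha
  antipode_right : ∀ h : H, ∀ (n : ℕ) (d1 d2 : Fin n → H),
    comul h = ∑ i, d1 i ⊗ₜ[k] d2 i →
    ∑ i, d1 i * beta * S (d2 i) = counit h • beta
  antipode_Phi : ∀ (n : ℕ) (X1 X2 X3 : Fin n → H),
    Phi = ∑ i, X1 i ⊗ₜ[k] (X2 i ⊗ₜ[k] X3 i) →
    ∑ i, X1 i * beta * S (X2 i) * alpha * X3 i = 1
  antipode_PhiInv : ∀ (n : ℕ) (x1 x2 x3 : Fin n → H),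
    PhiInv = ∑ i, x1 i ⊗ₜ[k] (x2 i ⊗ₜ[k] x3 i) →
    ∑ i, S (x1 i) * alpha * x2 i * beta * S (x3 i) = 1
  counit_alpha : counit alpha = 1
  counit_beta : counit beta = 1

lemma exists_fin_rep2 {k H : Type*} [Field k] [Ring H] [Algebra k H] (y : H ⊗[k] H) :
    ∃ (n : ℕ) (f g : Fin n → H), y = ∑ i, f i ⊗ₜ[k] g i := by
  induction y using TensorProduct.induction_on with
  | zero => exact ⟨0, fun _ => 0, fun _ => 0, by simp⟩
  | tmul a b => exact ⟨1, fun _ => a, fun _ => b, by simp⟩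
  | add y z hy hz =>
    obtain ⟨n, f, g, rfl⟩ := hy
    obtain ⟨m, f', g', rfl⟩ := hz
    exact ⟨n + m, Fin.append f f', Fin.append g g', by simp [Fin.sum_univ_add]⟩

lemma exists_fin_rep3 {k H : Type*} [Field k] [Ring H] [Algebra k H]
    (y : H ⊗[k] (H ⊗[k] H)) :
    ∃ (n : ℕ) (f g h : Fin n → H), y = ∑ i, f i ⊗ₜ[k] (g i ⊗ₜ[k] h i) := by
  induction y using TensorProduct.induction_on with
  | zero => exact ⟨0, fun _ => 0, fun _ => 0, fun _ => 0, by simp⟩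
  | tmul a b =>
    obtain ⟨n, f, g, rfl⟩ := exists_fin_rep2 b
    exact ⟨n, fun _ => a, f, g, by rw [TensorProduct.tmul_sum]⟩
  | add y z hy hz =>
    obtain ⟨n, f, g, h, rfl⟩ := hy
    obtain ⟨m, f', g', h', rfl⟩ := hz
    exact ⟨n + m, Fin.append f f', Fin.append g g', Fin.append h h',
      by simp [Fin.sum_univ_add]⟩

section aux
variable {k H : Type*} [Field k] [Ring H] [Algebra k H] (Q : QuasiBialgebra k H)

/-- `h ⊗ g ↦ ε(h) g` -/
noncomputable def epsL : H ⊗[k] H →ₐ[k] H :=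
  (Algebra.TensorProduct.lid k H).toAlgHom.comp
    (Algebra.TensorProduct.map Q.counit (AlgHom.id k H))

/-- `h ⊗ g ↦ ε(g) h` -/
noncomputable def epsR : H ⊗[k] H →ₐ[k] H :=
  (Algebra.TensorProduct.rid k k H).toAlgHom.comp
    (Algebra.TensorProduct.map (AlgHom.id k H) Q.counit)

lemma epsL_tmul (a b : H) : epsL Q (a ⊗ₜ b) = Q.counit a • b := by simp [epsL]

lemma epsR_tmul (a b : H) : epsR Q (a ⊗ₜ b) = Q.counit b • a := by simp [epsR]

lemma epsL_comul (h : H) : epsL Q (Q.comul h) = h := by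
  simp [epsL, Q.counit_comul_left]

lemma epsR_comul (h : H) : epsR Q (Q.comul h) = h := by
  simp [epsR, Q.counit_comul_right]

/-- apply the counit to the third of four legs -/
noncomputable def E3 : H ⊗[k] (H ⊗[k] (H ⊗[k] H)) →ₐ[k] H ⊗[k] (H ⊗[k] H) :=
  Algebra.TensorProduct.map (AlgHom.id k H)
    (Algebra.TensorProduct.map (AlgHom.id k H) (epsL Q))

lemma mid_Phi : Algebra.TensorProduct.map (AlgHom.id k H) (epsL Q) Q.Phi = 1 := by
  have h := congrArg (Algebra.TensorProduct.map (AlgHom.id k H)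
    (Algebra.TensorProduct.lid k H).toAlgHom) Q.counit_Phi
  rw [map_one] at h
  rw [← h]
  obtain ⟨n, f, g, l, e⟩ := exists_fin_rep3 Q.Phi
  rw [e]
  simp [epsL]

lemma E3_1 : E3 Q ((1 : H) ⊗ₜ[k] Q.Phi) = 1 := by
  have : E3 Q ((1 : H) ⊗ₜ[k] Q.Phi) =
      1 ⊗ₜ (Algebra.TensorProduct.map (AlgHom.id k H) (epsL Q) Q.Phi) := by
    simp [E3]
  rw [this, mid_Phi]; rfl

lemma E3_2_aux (y : H ⊗[k] H) (g : H) :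
    Algebra.TensorProduct.map (AlgHom.id k H) (epsL Q)
      (Algebra.TensorProduct.assoc k k k H H H (y ⊗ₜ g)) = epsR Q y ⊗ₜ g := by
  induction y using TensorProduct.induction_on with
  | zero => simp
  | tmul a b => simp [epsL_tmul, epsR_tmul, TensorProduct.smul_tmul]
  | add y z hy hz => simp only [TensorProduct.add_tmul, map_add, hy, hz]

lemma E3_2 (y : H ⊗[k] (H ⊗[k] H)) :
    E3 Q (Algebra.TensorProduct.map (AlgHom.id k H)
          (((Algebra.TensorProduct.assoc k k k H H H).toAlgHom).comp
            (Algebra.TensorProduct.map Q.comul (AlgHom.id k H))) y) = y := by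
  obtain ⟨n, f, g, l, rfl⟩ := exists_fin_rep3 y
  rw [map_sum, map_sum]
  refine Finset.sum_congr rfl fun i _ => ?_
  have := E3_2_aux Q (Q.comul (g i)) (l i)
  rw [epsR_comul] at this
  conv_rhs => rw [← this]
  simp [E3]

lemma E3_4 (y : H ⊗[k] (H ⊗[k] H)) :
    E3 Q (Algebra.TensorProduct.map (AlgHom.id k H)
          (Algebra.TensorProduct.map (AlgHom.id k H) Q.comul) y) = y := by
  obtain ⟨n, f, g, l, rfl⟩ := exists_fin_rep3 y
  simp [E3, epsL_comul]

lemma E3_5_aux (y : H ⊗[k] H) (z : H ⊗[k] H) :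
    E3 Q (Algebra.TensorProduct.assoc k k k H H (H ⊗[k] H) (y ⊗ₜ z)) =
      Algebra.TensorProduct.assoc k k k H H H (y ⊗ₜ epsL Q z) := by
  induction y using TensorProduct.induction_on with
  | zero => simp
  | tmul a b => simp [E3]
  | add y z hy hz => simp only [TensorProduct.add_tmul, map_add, hy, hz]

lemma E3_5 :
    E3 Q (Algebra.TensorProduct.assoc k k k H H (H ⊗[k] H)
          (Algebra.TensorProduct.map Q.comul (AlgHom.id k (H ⊗[k] H)) Q.Phi)) = 1 := by
  have h := congrArg (fun y => Algebra.TensorProduct.assoc k k k H H H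
    (Algebra.TensorProduct.map Q.comul (AlgHom.id k H) y)) (mid_Phi Q)
  simp only [map_one] at h
  rw [← h]
  obtain ⟨n, f, g, l, e⟩ := exists_fin_rep3 Q.Phi
  rw [e]
  simp only [map_sum, Algebra.TensorProduct.map_tmul, E3_5_aux, AlgHom.id_apply]

lemma right_Phi : Algebra.TensorProduct.map (AlgHom.id k H) (epsR Q) Q.Phi = 1 := by
  have h := congrArg (E3 Q) Q.pentagon
  rw [map_mul, map_mul, map_mul, E3_1, E3_2, E3_4, E3_5, one_mul, mul_one] at h
  have h2 := congrArg (fun y => Q.PhiInv * y) h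
  simp only [← mul_assoc, Q.inv_mul_Phi, one_mul] at h2
  have h3 := congrArg (Algebra.TensorProduct.map (AlgHom.id k H) (epsR Q)) h2
  rw [map_one] at h3
  rw [← h3]
  obtain ⟨n, f, g, l, e⟩ := exists_fin_rep3 Q.Phi
  rw [e]
  simp [E3, epsL_tmul, epsR_tmul]

lemma right_PhiInv : Algebra.TensorProduct.map (AlgHom.id k H) (epsR Q) Q.PhiInv = 1 := by
  have h := congrArg (Algebra.TensorProduct.map (AlgHom.id k H) (epsR Q)) Q.Phi_mul_inv
  rwa [map_mul, right_Phi, one_mul, map_one] at h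

end aux

/-- If the smash-product-type multiplication on `A ⊗ H` is associative, then the
multiplication of `A` satisfies `(ab)c = (X¹·a)((X²·b)(X³·c))`. -/
theorem statement0 {k H A : Type*} [Field k] [Ring H] [Algebra k H]
    [AddCommGroup A] [Module k A] (Q : QuasiBialgebra k H)
    (act : H →ₗ[k] A →ₗ[k] A)
    (act_one : ∀ a : A, act 1 a = a)
    (act_mul : ∀ (g h : H) (a : A), act (g * h) a = act g (act h a))
    (mulA : A →ₗ[k] A →ₗ[k] A)
    (mulB : (A ⊗[k] H) →ₗ[k] (A ⊗[k] H) →ₗ[k] (A ⊗[k] H))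
    (hmulB : ∀ (a a' : A) (h h' : H) (n : ℕ) (x1 x2 x3 : Fin n → H),
      Q.PhiInv = ∑ i, x1 i ⊗ₜ[k] (x2 i ⊗ₜ[k] x3 i) →
      ∀ (m : ℕ) (d1 d2 : Fin m → H), Q.comul h = ∑ j, d1 j ⊗ₜ[k] d2 j →
      mulB (a ⊗ₜ[k] h) (a' ⊗ₜ[k] h')
        = ∑ i, ∑ j, (mulA (act (x1 i) a) (act (x2 i * d1 j) a')) ⊗ₜ[k] (x3 i * d2 j * h'))
    (hassoc : ∀ u w z : A ⊗[k] H, mulB (mulB u w) z = mulB u (mulB w z)) :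
    ∀ (a b c : A) (n : ℕ) (X1 X2 X3 : Fin n → H),
      Q.Phi = ∑ i, X1 i ⊗ₜ[k] (X2 i ⊗ₜ[k] X3 i) →
      mulA (mulA a b) c
        = ∑ i, mulA (act (X1 i) a) (mulA (act (X2 i) b) (act (X3 i) c)) := by
  intro a b c n X1 X2 X3 hX
  obtain ⟨p, x1, x2, x3, hx⟩ := exists_fin_rep3 Q.PhiInv
  -- apply the counit to the second leg of `A ⊗ H`
  let G : A ⊗[k] H →ₗ[k] A :=
    (TensorProduct.rid k A).toLinearMap ∘ₗ TensorProduct.map LinearMap.id Q.counit.toLinearMap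
  have hG : ∀ (a : A) (h : H), G (a ⊗ₜ h) = Q.counit h • a := by
    intro a h; simp [G]
  have key : ∀ (a a' : A) (h h' : H),
      G (mulB (a ⊗ₜ h) (a' ⊗ₜ h')) = Q.counit h' • mulA a (act h a') := by
    intro a a' h h'
    obtain ⟨m, d1, d2, hd⟩ := exists_fin_rep2 (Q.comul h)
    rw [hmulB a a' h h' p x1 x2 x3 hx m d1 d2 hd]
    have e1 : ∑ j, Q.counit (d2 j) • d1 j = h := by
      have := epsR_comul Q h
      rw [hd] at this
      simpa [epsR_tmul] using this
    have e2 := right_PhiInv Q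
    rw [hx] at e2
    let L : H ⊗[k] H →ₗ[k] A :=
      TensorProduct.lift mulA ∘ₗ TensorProduct.map (act.flip a) (act.flip (act h a'))
    have hL : ∀ g g' : H, L (g ⊗ₜ g') = mulA (act g a) (act g' (act h a')) := by
      intro g g'; simp [L]
    have e3 := congrArg L e2
    rw [Algebra.TensorProduct.one_def, hL, act_one, act_one] at e3
    rw [← e3]
    simp only [map_sum, hG, map_mul, Algebra.TensorProduct.map_tmul, AlgHom.id_apply,
      epsR_tmul, TensorProduct.tmul_smul, map_smul, hL, Finset.smul_sum]
    refine Finset.sum_congr rfl fun i _ => ?_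
    conv_rhs => rw [← act_mul, ← e1]
    simp only [Finset.mul_sum, map_sum, mul_smul_comm, map_smul, LinearMap.sum_apply,
      LinearMap.smul_apply, Finset.smul_sum, smul_smul]
    refine Finset.sum_congr rfl fun j _ => ?_
    congr 1
    ring
  have one_mulB : ∀ a b : A, mulB (a ⊗ₜ 1) (b ⊗ₜ 1) =
      ∑ i, (mulA (act (x1 i) a) (act (x2 i) b)) ⊗ₜ[k] x3 i := by
    intro a b
    rw [hmulB a b 1 1 p x1 x2 x3 hx 1 (fun _ => 1) (fun _ => 1)
      (by simp [Algebra.TensorProduct.one_def])]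
    simp
  have main : ∀ a b c : A,
      ∑ i, mulA (mulA (act (x1 i) a) (act (x2 i) b)) (act (x3 i) c) = mulA a (mulA b c) := by
    intro a b c
    have h := congrArg G (hassoc (a ⊗ₜ 1) (b ⊗ₜ 1) (c ⊗ₜ 1))
    have hw : ∀ w, G (mulB (a ⊗ₜ 1) w) = mulA a (G w) := by
      intro w
      induction w using TensorProduct.induction_on with
      | zero => simp
      | tmul a' h' => rw [key, hG, act_one, map_smul]
      | add y z hy hz => simp only [map_add, hy, hz]
    rw [hw, key, act_one, one_mulB] at h
    simpa [key] using h
  let L : H ⊗[k] (H ⊗[k] H) →ₗ[k] A :=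
    TensorProduct.lift mulA ∘ₗ TensorProduct.map
      (TensorProduct.lift mulA ∘ₗ TensorProduct.map (act.flip a) (act.flip b)) (act.flip c)
      ∘ₗ (TensorProduct.assoc k H H H).symm.toLinearMap
  have hL : ∀ g g' g'' : H, L (g ⊗ₜ (g' ⊗ₜ g'')) =
      mulA (mulA (act g a) (act g' b)) (act g'' c) := by
    intro g g' g''; simp [L]
  have e := congrArg L Q.inv_mul_Phi
  rw [Algebra.TensorProduct.one_def, Algebra.TensorProduct.one_def, hL, act_one, act_one,
    act_one, hx, hX, Finset.sum_mul_sum, Finset.sum_comm] at e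
  rw [← e]
  simp only [map_sum, Algebra.TensorProduct.tmul_mul_tmul, hL, act_mul, main]
end

section
/- Let H be a quasi-Hopf algebra. Then q¹₁t¹x¹ ⊗ q¹₍₂,₁₎t²₁z¹x² ⊗ q¹₍₂,₂₎t²₂z²βS(q²t³z³)x³ = 1⊗1⊗1 in H⊗H⊗H, where q_R = q¹⊗q² = X¹ ⊗ S⁻¹(αX³)X², and x¹⊗x²⊗x³, t¹⊗t²⊗t³, z¹⊗z²⊗z³ are three copies of Φ⁻¹. -/
open TensorProduct BigOperators

namespace QHaux

set_option synthInstance.maxHeartbeats 400000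
set_option maxSynthPendingDepth 8
set_option maxHeartbeats 1000000

variable {k H : Type*} [Field k] [Ring H] [Algebra k H]

section Bi
variable (Q : QuasiBialgebra k H)

/-- `h ↦ ε(h) 1` -/
noncomputable def ee : H →ₐ[k] H := (Algebra.ofId k H).comp Q.counit

noncomputable def ee2 : H →ₐ[k] H ⊗[k] H := (Algebra.ofId k (H ⊗[k] H)).comp Q.counit

lemma ee_apply (h : H) : ee Q h = Q.counit h • (1 : H) := by
  simp [ee, Algebra.ofId_apply, Algebra.algebraMap_eq_smul_one]

lemma ee2_apply (h : H) : ee2 Q h = Q.counit h • (1 : H ⊗[k] H) := by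
  simp [ee2, Algebra.ofId_apply, Algebra.algebraMap_eq_smul_one]

/-- `(id ⊗ Δ ⊗ id)` -/
noncomputable def B : H ⊗[k] (H ⊗[k] H) →ₐ[k] H ⊗[k] (H ⊗[k] (H ⊗[k] H)) :=
  Algebra.TensorProduct.map (AlgHom.id k H)
          (((Algebra.TensorProduct.assoc k k k H H H).toAlgHom).comp
            (Algebra.TensorProduct.map Q.comul (AlgHom.id k H)))

/-- `w ↦ w ⊗ 1` -/
noncomputable def C : H ⊗[k] (H ⊗[k] H) →ₐ[k] H ⊗[k] (H ⊗[k] (H ⊗[k] H)) :=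
  Algebra.TensorProduct.map (AlgHom.id k H)
          (Algebra.TensorProduct.map (AlgHom.id k H)
            (Algebra.TensorProduct.includeLeft : H →ₐ[k] H ⊗[k] H))

/-- `(id ⊗ id ⊗ Δ)` -/
noncomputable def D : H ⊗[k] (H ⊗[k] H) →ₐ[k] H ⊗[k] (H ⊗[k] (H ⊗[k] H)) :=
  Algebra.TensorProduct.map (AlgHom.id k H)
          (Algebra.TensorProduct.map (AlgHom.id k H) Q.comul)

/-- `(Δ ⊗ id ⊗ id)` -/
noncomputable def E : H ⊗[k] (H ⊗[k] H) →ₐ[k] H ⊗[k] (H ⊗[k] (H ⊗[k] H)) :=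
  ((Algebra.TensorProduct.assoc k k k H H (H ⊗[k] H)).toAlgHom).comp
    (Algebra.TensorProduct.map Q.comul (AlgHom.id k (H ⊗[k] H)))

/-- `w ↦ 1 ⊗ w` -/
noncomputable def A : H ⊗[k] (H ⊗[k] H) →ₐ[k] H ⊗[k] (H ⊗[k] (H ⊗[k] H)) :=
  Algebra.TensorProduct.includeRight

lemma pent : A Q.Phi * B Q Q.Phi * C Q.Phi = D Q Q.Phi * E Q Q.Phi := Q.pentagon

/-- `(Δ ⊗ id)` -/
noncomputable def DL : H ⊗[k] H →ₐ[k] H ⊗[k] (H ⊗[k] H) :=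
  ((Algebra.TensorProduct.assoc k k k H H H).toAlgHom).comp
    (Algebra.TensorProduct.map Q.comul (AlgHom.id k H))

/-- `(id ⊗ Δ)` -/
noncomputable def DR : H ⊗[k] H →ₐ[k] H ⊗[k] (H ⊗[k] H) :=
  Algebra.TensorProduct.map (AlgHom.id k H) Q.comul

noncomputable def th : H ⊗[k] (H ⊗[k] H) →ₐ[k] H ⊗[k] (H ⊗[k] (H ⊗[k] H)) :=
  Algebra.TensorProduct.map (AlgHom.id k H)
          (Algebra.TensorProduct.map (AlgHom.id k H) (ee2 Q))

noncomputable def e2 : H ⊗[k] (H ⊗[k] H) →ₐ[k] H ⊗[k] (H ⊗[k] H) :=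
  Algebra.TensorProduct.map (AlgHom.id k H)
          (Algebra.TensorProduct.map (ee Q) (AlgHom.id k H))

noncomputable def ff : H ⊗[k] (H ⊗[k] (H ⊗[k] H)) →ₐ[k] H ⊗[k] (H ⊗[k] (H ⊗[k] H)) :=
  Algebra.TensorProduct.map (AlgHom.id k H) (e2 Q)

noncomputable def gg : H ⊗[k] (H ⊗[k] H) →ₐ[k] H ⊗[k] (H ⊗[k] (H ⊗[k] H)) :=
  Algebra.TensorProduct.map (AlgHom.id k H)
          (Algebra.TensorProduct.map (AlgHom.id k H)
            (Algebra.TensorProduct.includeRight : H →ₐ[k] H ⊗[k] H))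

lemma map_comp' {A1 B1 C1 A2 B2 C2 : Type*} [Ring A1] [Ring B1] [Ring C1] [Ring A2] [Ring B2]
    [Ring C2] [Algebra k A1] [Algebra k B1] [Algebra k C1] [Algebra k A2] [Algebra k B2]
    [Algebra k C2] (f : A1 →ₐ[k] B1) (g : B1 →ₐ[k] C1) (f' : A2 →ₐ[k] B2) (g' : B2 →ₐ[k] C2)
    (w : A1 ⊗[k] A2) :
    Algebra.TensorProduct.map g g' (Algebra.TensorProduct.map f f' w)
      = Algebra.TensorProduct.map (g.comp f) (g'.comp f') w := by
  induction w with
  | zero => simp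
  | tmul a b => simp
  | add x y hx hy => simp only [map_add, hx, hy]

lemma e2_Phi : e2 Q Q.Phi = 1 := by
  have h := congrArg (Algebra.TensorProduct.map (AlgHom.id k H)
    (Algebra.TensorProduct.map (Algebra.ofId k H) (AlgHom.id k H))) Q.counit_Phi
  rw [map_one] at h
  rw [← h]
  generalize Q.Phi = w
  induction w with
  | zero => simp
  | add x y hx hy => simp only [map_add, hx, hy]
  | tmul a b => 
    simp only [e2, Algebra.TensorProduct.map_tmul, map_comp']
    rfl

lemma ee_left (h : H) : Algebra.TensorProduct.map (ee Q) (AlgHom.id k H) (Q.comul h)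
    = 1 ⊗ₜ h := by
  have h1 := congrArg (Algebra.TensorProduct.map (Algebra.ofId k H) (AlgHom.id k H))
    (Q.counit_comul_left h)
  rw [map_comp'] at h1
  simpa [ee] using h1

lemma ee_right (h : H) : Algebra.TensorProduct.map (AlgHom.id k H) (ee Q) (Q.comul h)
    = h ⊗ₜ 1 := by
  have h1 := congrArg (Algebra.TensorProduct.map (AlgHom.id k H) (Algebra.ofId k H))
    (Q.counit_comul_right h)
  rw [map_comp'] at h1
  simpa [ee] using h1

/-- induction for triple tensors -/
lemma ind3 {P : H ⊗[k] (H ⊗[k] H) → Prop} (h0 : P 0) (ha : ∀ x y, P x → P y → P (x + y))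
    (ht : ∀ a b c, P (a ⊗ₜ (b ⊗ₜ c))) (w : H ⊗[k] (H ⊗[k] H)) : P w := by
  induction w with
  | zero => exact h0
  | add x y hx hy => exact ha x y hx hy
  | tmul a v =>
    induction v with
    | zero => simpa using h0
    | add x y hx hy => rw [TensorProduct.tmul_add]; exact ha _ _ hx hy
    | tmul b c => exact ht a b c

lemma ind4 {P : H ⊗[k] (H ⊗[k] (H ⊗[k] H)) → Prop} (h0 : P 0)
    (ha : ∀ x y, P x → P y → P (x + y))
    (ht : ∀ a b c d, P (a ⊗ₜ (b ⊗ₜ (c ⊗ₜ d)))) (w : H ⊗[k] (H ⊗[k] (H ⊗[k] H))) : P w := by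
  induction w with
  | zero => exact h0
  | add x y hx hy => exact ha x y hx hy
  | tmul a v =>
    induction v using ind3 with
    | h0 => simpa using h0
    | ha x y hx hy => rw [TensorProduct.tmul_add]; exact ha _ _ hx hy
    | ht b c d => exact ht a b c d

lemma ff_A (w : H ⊗[k] (H ⊗[k] H)) : ff Q (A w) = A (e2 Q w) := by
  simp [ff, A]

lemma ff_B (w : H ⊗[k] (H ⊗[k] H)) : ff Q (B Q w) = gg w := by
  induction w using ind3 with
  | h0 => simp
  | ha x y hx hy => simp only [map_add, hx, hy]
  | ht a b c =>
    have key : ∀ v : H ⊗[k] H, e2 Q ((Algebra.TensorProduct.assoc k k k H H H) (v ⊗ₜ c))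
      = (Algebra.TensorProduct.assoc k k k H H H)
        ((Algebra.TensorProduct.map (AlgHom.id k H) (ee Q) v) ⊗ₜ c) := by
      intro v
      induction v with
      | zero => simp
      | add x y hx hy => simp only [map_add, TensorProduct.add_tmul, hx, hy]
      | tmul p q => simp [e2]
    have := key (Q.comul b)
    rw [ee_right] at this
    simp [ff, B, gg, this]

lemma ff_C (w : H ⊗[k] (H ⊗[k] H)) : ff Q (C w) = th Q w := by
  induction w using ind3 with
  | h0 => simp
  | ha x y hx hy => simp only [map_add, hx, hy]
  | ht a b c =>
    simp [ff, C, th, e2, ee_apply, ee2_apply, Algebra.TensorProduct.one_def,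
      TensorProduct.smul_tmul']

lemma ff_D (w : H ⊗[k] (H ⊗[k] H)) : ff Q (D Q w) = gg w := by
  induction w using ind3 with
  | h0 => simp
  | ha x y hx hy => simp only [map_add, hx, hy]
  | ht a b c => simp [ff, D, gg, e2, ee_left]

lemma ff_E (w : H ⊗[k] (H ⊗[k] H)) : ff Q (E Q w) = E Q (e2 Q w) := by
  induction w using ind3 with
  | h0 => simp
  | ha x y hx hy => simp only [map_add, hx, hy]
  | ht a b c =>
    simp only [E, e2, AlgHom.comp_apply, Algebra.TensorProduct.map_tmul, AlgHom.id_apply]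
    generalize Q.comul a = v
    induction v with
    | zero => simp
    | add x y hx hy => simp only [map_add, TensorProduct.add_tmul, hx, hy]
    | tmul p q => simp [ff, e2]

lemma th_Phi : th Q Q.Phi = 1 := by
  have h := congrArg (ff Q) (pent Q)
  simp only [map_mul, ff_A, ff_B, ff_C, ff_D, ff_E, e2_Phi, map_one, one_mul, mul_one] at h
  have h2 := congrArg (fun x => gg Q.PhiInv * x) h
  simpa [← mul_assoc, ← map_mul, Q.inv_mul_Phi] using h2

lemma th_PhiInv : th Q Q.PhiInv = 1 := by
  have := congrArg (th Q) Q.Phi_mul_inv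
  simpa [th_Phi] using this

lemma pent1 : B Q Q.PhiInv * A Q.PhiInv = C Q.Phi * E Q Q.PhiInv * D Q Q.PhiInv := by
  have hA : A Q.Phi * A Q.PhiInv = (1 : H ⊗[k] (H ⊗[k] (H ⊗[k] H))) := by
    rw [← map_mul, Q.Phi_mul_inv, map_one]
  have hB : B Q Q.Phi * B Q Q.PhiInv = 1 := by rw [← map_mul, Q.Phi_mul_inv, map_one]
  have hE : E Q Q.Phi * E Q Q.PhiInv = 1 := by rw [← map_mul, Q.Phi_mul_inv, map_one]
  have hD : D Q Q.Phi * D Q Q.PhiInv = 1 := by rw [← map_mul, Q.Phi_mul_inv, map_one]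
  have hA' : A Q.PhiInv * A Q.Phi = (1 : H ⊗[k] (H ⊗[k] (H ⊗[k] H))) := by
    rw [← map_mul, Q.inv_mul_Phi, map_one]
  have hB' : B Q Q.PhiInv * B Q Q.Phi = 1 := by rw [← map_mul, Q.inv_mul_Phi, map_one]
  have h := pent Q
  calc B Q Q.PhiInv * A Q.PhiInv
      = B Q Q.PhiInv * A Q.PhiInv * (D Q Q.Phi * (E Q Q.Phi * E Q Q.PhiInv) * D Q Q.PhiInv) := by
        rw [hE, mul_one, hD, mul_one]
    _ = B Q Q.PhiInv * A Q.PhiInv * (D Q Q.Phi * E Q Q.Phi) * E Q Q.PhiInv * D Q Q.PhiInv := by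
        simp only [mul_assoc]
    _ = B Q Q.PhiInv * (A Q.PhiInv * A Q.Phi) * B Q Q.Phi * C Q.Phi * E Q Q.PhiInv
          * D Q Q.PhiInv := by
        rw [← h]; simp only [mul_assoc]
    _ = _ := by rw [hA', mul_one, hB', one_mul]

lemma pent2 : E Q Q.Phi * C Q.PhiInv = D Q Q.PhiInv * A Q.Phi * B Q Q.Phi := by
  have hC : C Q.Phi * C Q.PhiInv = (1 : H ⊗[k] (H ⊗[k] (H ⊗[k] H))) := by
    rw [← map_mul, Q.Phi_mul_inv, map_one]
  have hD' : D Q Q.PhiInv * D Q Q.Phi = 1 := by rw [← map_mul, Q.inv_mul_Phi, map_one]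
  have h := pent Q
  calc E Q Q.Phi * C Q.PhiInv = (D Q Q.PhiInv * D Q Q.Phi) * E Q Q.Phi * C Q.PhiInv := by
        rw [hD', one_mul]
    _ = D Q Q.PhiInv * (D Q Q.Phi * E Q Q.Phi) * C Q.PhiInv := by simp only [mul_assoc]
    _ = D Q Q.PhiInv * A Q.Phi * B Q Q.Phi * (C Q.Phi * C Q.PhiInv) := by
        rw [← h]; simp only [mul_assoc]
    _ = _ := by rw [hC, mul_one]

end Bi

section Hopf
variable (Q : QuasiHopfAlgebra k H)

/-- `c ⊗ d ↦ c β S(d)` -/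
noncomputable def N : H ⊗[k] H →ₗ[k] H :=
  TensorProduct.lift ((LinearMap.mul k H).compl₁₂ (LinearMap.mulRight k Q.beta) Q.S)

@[simp] lemma N_tmul (c d : H) : N Q (c ⊗ₜ d) = c * Q.beta * Q.S d := by simp [N]

/-- `d ⊗ e ↦ S(d) α e` -/
noncomputable def R : H ⊗[k] H →ₗ[k] H :=
  TensorProduct.lift ((LinearMap.mul k H).compl₁₂ ((LinearMap.mulRight k Q.alpha) ∘ₗ Q.S)
    LinearMap.id)

@[simp] lemma R_tmul (c d : H) : R Q (c ⊗ₜ d) = Q.S c * Q.alpha * d := by simp [R]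

/-- `c ⊗ d ⊗ e ↦ c β S(d) α e` -/
noncomputable def M : H ⊗[k] (H ⊗[k] H) →ₗ[k] H :=
  TensorProduct.lift ((LinearMap.mul k H).compl₁₂ (LinearMap.mulRight k Q.beta) (R Q))

@[simp] lemma M_tmul (c : H) (w : H ⊗[k] H) : M Q (c ⊗ₜ w) = c * Q.beta * R Q w := by simp [M]

lemma exists_fin2 (w : H ⊗[k] H) : ∃ (n : ℕ) (d1 d2 : Fin n → H), w = ∑ i, d1 i ⊗ₜ[k] d2 i := by
  obtain ⟨S, hS⟩ := TensorProduct.exists_finset w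
  refine ⟨S.card, fun i => (S.equivFin.symm i).1.1, fun i => (S.equivFin.symm i).1.2, ?_⟩
  rw [hS, ← Finset.sum_coe_sort]
  exact (Equiv.sum_comp S.equivFin.symm (fun i : S => i.1.1 ⊗ₜ[k] i.1.2)).symm

lemma exists_fin3 (w : H ⊗[k] (H ⊗[k] H)) : ∃ (n : ℕ) (d1 d2 d3 : Fin n → H),
    w = ∑ i, d1 i ⊗ₜ[k] (d2 i ⊗ₜ[k] d3 i) := by
  induction w using ind3 with
  | h0 => exact ⟨0, 0, 0, 0, by simp⟩
  | ht a b c => exact ⟨1, fun _ => a, fun _ => b, fun _ => c, by simp⟩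
  | ha x y hx hy =>
    obtain ⟨n, a, b, c, rfl⟩ := hx
    obtain ⟨m, a', b', c', rfl⟩ := hy
    exact ⟨n + m, Fin.append a a', Fin.append b b', Fin.append c c', by simp [Fin.sum_univ_add]⟩

lemma N_comul (h : H) : N Q (Q.comul h) = Q.counit h • Q.beta := by
  obtain ⟨n, a, b, hab⟩ := exists_fin2 (Q.comul h)
  rw [← Q.antipode_right h n a b hab, hab]
  simp

lemma R_comul (h : H) : R Q (Q.comul h) = Q.counit h • Q.alpha := by
  obtain ⟨n, a, b, hab⟩ := exists_fin2 (Q.comul h)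
  rw [← Q.antipode_left h n a b hab, hab]
  simp

lemma M_Phi : M Q Q.Phi = 1 := by
  obtain ⟨n, a, b, c, hab⟩ := exists_fin3 Q.Phi
  rw [← Q.antipode_Phi n a b c hab, hab]
  simp [mul_assoc]

lemma N_mul (c d : H) (w : H ⊗[k] H) : N Q ((c ⊗ₜ d) * w) = c * N Q w * Q.S d := by
  induction w with
  | zero => simp
  | add x y hx hy => simp only [map_add, mul_add, add_mul, hx, hy]
  | tmul p q => simp [Q.S_mul, mul_assoc]

lemma R_mul (c d : H) (w : H ⊗[k] H) : R Q (w * (c ⊗ₜ d)) = Q.S c * R Q w * d := by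
  induction w with
  | zero => simp
  | add x y hx hy => simp only [map_add, mul_add, add_mul, hx, hy]
  | tmul p q => simp [Q.S_mul, mul_assoc]

/-- `a ⊗ b ⊗ c ⊗ d ↦ a ⊗ b ⊗ c β S(d)` -/
noncomputable def N4 : H ⊗[k] (H ⊗[k] (H ⊗[k] H)) →ₗ[k] H ⊗[k] (H ⊗[k] H) :=
  TensorProduct.map LinearMap.id (TensorProduct.map LinearMap.id (N Q))

noncomputable def N3 : H ⊗[k] (H ⊗[k] H) →ₗ[k] H ⊗[k] H :=
  TensorProduct.map LinearMap.id (N Q)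

noncomputable def L4 : H ⊗[k] (H ⊗[k] (H ⊗[k] H)) →ₗ[k] H ⊗[k] H :=
  TensorProduct.map LinearMap.id (M Q)

lemma N4_D (w : H ⊗[k] (H ⊗[k] (H ⊗[k] H))) (v : H ⊗[k] (H ⊗[k] H)) :
    N4 Q (w * D Q.toQuasiBialgebra v) = N4 Q (w * th Q.toQuasiBialgebra v) := by
  induction v using ind3 with
  | h0 => simp
  | ha x y hx hy => simp only [map_add, mul_add, hx, hy]
  | ht a b c =>
    induction w using ind4 with
    | h0 => simp
    | ha x y hx hy => simp only [map_add, add_mul, hx, hy]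
    | ht p q r s =>
      simp [D, th, N4, ee2_apply, N_mul, N_comul]

lemma L4_D (w : H ⊗[k] (H ⊗[k] (H ⊗[k] H))) (v : H ⊗[k] (H ⊗[k] H)) :
    L4 Q (D Q.toQuasiBialgebra v * w) = L4 Q (th Q.toQuasiBialgebra v * w) := by
  induction v using ind3 with
  | h0 => simp
  | ha x y hx hy => simp only [map_add, add_mul, hx, hy]
  | ht a b c =>
    induction w using ind4 with
    | h0 => simp
    | ha x y hx hy => simp only [map_add, mul_add, hx, hy]
    | ht p q r s =>
      simp [D, th, L4, ee2_apply, R_mul, R_comul]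

/-- `v ↦ v¹ ⊗ ε(v²) 1 ⊗ 1 ⊗ v³` -/
noncomputable def bt (Q : QuasiBialgebra k H) :
    H ⊗[k] (H ⊗[k] H) →ₐ[k] H ⊗[k] (H ⊗[k] (H ⊗[k] H)) :=
  (gg (k := k) (H := H)).comp (e2 Q)

lemma M_mul (a c : H) (w u : H ⊗[k] H) : 
    M Q ((a ⊗ₜ w) * (Algebra.TensorProduct.assoc k k k H H H) (u ⊗ₜ c))
      = a * N Q u * R Q w * c := by
  induction u with
  | zero => simp
  | add x y hx hy => simp only [map_add, TensorProduct.add_tmul, mul_add, add_mul, hx, hy]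
  | tmul p q => simp [R_mul, mul_assoc]

lemma L4_B (w : H ⊗[k] (H ⊗[k] (H ⊗[k] H))) (v : H ⊗[k] (H ⊗[k] H)) :
    L4 Q (w * B Q.toQuasiBialgebra v) = L4 Q (w * bt Q.toQuasiBialgebra v) := by
  induction v using ind3 with
  | h0 => simp
  | ha x y hx hy => simp only [map_add, mul_add, hx, hy]
  | ht a b c =>
    induction w using ind4 with
    | h0 => simp
    | ha x y hx hy => simp only [map_add, add_mul, hx, hy]
    | ht p q r s =>
      have := M_mul Q q c (r ⊗ₜ s) (Q.comul b)
      simp [B, bt, gg, e2, L4, ee_apply, this, N_comul, mul_assoc, TensorProduct.smul_tmul']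

lemma L4_pent : L4 Q (E Q.toQuasiBialgebra Q.Phi * C Q.PhiInv) = 1 := by
  rw [pent2, L4_B, mul_assoc, L4_D, th_PhiInv, one_mul, bt, AlgHom.comp_apply, e2_Phi, map_one,
    mul_one]
  simp [L4, A, M_Phi, Algebra.TensorProduct.one_def]

lemma N4_CE (p u : H ⊗[k] (H ⊗[k] H)) : N4 Q (C p * E Q.toQuasiBialgebra u)
    = p * DL Q.toQuasiBialgebra (N3 Q u) := by
  induction p using ind3 with
  | h0 => simp
  | ha x y hx hy => simp only [map_add, add_mul, hx, hy]
  | ht p q r =>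
    induction u using ind3 with
    | h0 => simp
    | ha x y hx hy => simp only [map_add, mul_add, hx, hy]
    | ht a b c =>
      simp only [E, DL, N3, C, AlgHom.comp_apply, Algebra.TensorProduct.map_tmul,
        TensorProduct.map_tmul]
      generalize Q.comul a = v
      induction v with
      | zero => simp
      | add x y hx hy => 
        simp only [map_add, TensorProduct.add_tmul, mul_add, hx, hy]
      | tmul x y => simp [N4, mul_assoc]

lemma N4_pent : N4 Q (B Q.toQuasiBialgebra Q.PhiInv * A Q.PhiInv)
    = Q.Phi * DL Q.toQuasiBialgebra (N3 Q Q.PhiInv) := by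
  rw [pent1, N4_D, th_PhiInv, mul_one, N4_CE]

lemma coassoc' (h : H) : DR Q.toQuasiBialgebra (Q.comul h) * Q.Phi
    = Q.Phi * DL Q.toQuasiBialgebra (Q.comul h) := by
  have := Q.comul_coassoc h
  change DR Q.toQuasiBialgebra (Q.comul h) = Q.Phi * DL Q.toQuasiBialgebra (Q.comul h) * Q.PhiInv
    at this
  rw [this, mul_assoc, Q.inv_mul_Phi, mul_one]

lemma L4_EC (a b c : H) (u : H ⊗[k] (H ⊗[k] H)) :
    L4 Q (E Q.toQuasiBialgebra (a ⊗ₜ (b ⊗ₜ c)) * C u)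
      = Q.comul a * N3 Q u * (1 ⊗ₜ (Q.S b * Q.alpha * c)) := by
  induction u using ind3 with
  | h0 => simp
  | ha x y hx hy => simp only [map_add, mul_add, add_mul, hx, hy]
  | ht p q r =>
    simp only [E, N3, C, AlgHom.comp_apply, Algebra.TensorProduct.map_tmul,
      TensorProduct.map_tmul]
    generalize Q.comul a = v
    induction v with
    | zero => simp
    | add x y hx hy =>
      simp only [map_add, TensorProduct.add_tmul, add_mul, hx, hy]
    | tmul x y => simp [L4, Q.S_mul, mul_assoc]

lemma main_aux (n : ℕ) (X1 X2 X3 : Fin n → H)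
    (hX : Q.Phi = ∑ i, X1 i ⊗ₜ[k] (X2 i ⊗ₜ[k] X3 i)) :
    ∑ i, DR Q.toQuasiBialgebra (Q.comul (X1 i))
      * N4 Q (B Q.toQuasiBialgebra Q.PhiInv * A Q.PhiInv)
      * (1 ⊗ₜ (1 ⊗ₜ (Q.S (X2 i) * Q.alpha * X3 i))) * Q.PhiInv = 1 := by
  have h1 : ∀ y : H, (1 : H) ⊗ₜ[k] ((1 : H) ⊗ₜ[k] y) = DL Q.toQuasiBialgebra (1 ⊗ₜ y) := by
    intro y
    simp [DL, Algebra.TensorProduct.one_def]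
  have h2 := L4_pent Q
  have h3 : E Q.toQuasiBialgebra Q.Phi
      = ∑ i, E Q.toQuasiBialgebra (X1 i ⊗ₜ[k] (X2 i ⊗ₜ[k] X3 i)) := by
    rw [← map_sum, ← hX]
  rw [h3, Finset.sum_mul, map_sum] at h2
  simp only [L4_EC] at h2
  rw [← Finset.sum_mul, N4_pent]
  simp only [← mul_assoc, coassoc', h1]
  simp only [mul_assoc Q.Phi, ← map_mul]
  rw [← Finset.mul_sum, ← map_sum]
  rw [h2, map_one, mul_one, Q.Phi_mul_inv]

end Hopf

end QHaux

/-- Lemma 3: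
`q¹₁t¹x¹ ⊗ q¹₍₂,₁₎t²₁z¹x² ⊗ q¹₍₂,₂₎t²₂z²βS(q²t³z³)x³ = 1 ⊗ 1 ⊗ 1`, where
`q_R = q¹ ⊗ q² = X¹ ⊗ S⁻¹(αX³)X²` and `x, t, z` are three copies of `Φ⁻¹`.  All Sweedler
components are handled via universally quantified finite representations. -/
theorem statement3 {k H : Type*} [Field k] [Ring H] [Algebra k H]
    (Q : QuasiHopfAlgebra k H) :
    ∀ (nq : ℕ) (Xq1 Xq2 Xq3 : Fin nq → H),
      Q.Phi = ∑ i, Xq1 i ⊗ₜ[k] (Xq2 i ⊗ₜ[k] Xq3 i) →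
    ∀ (mq : ℕ) (A1 A2 A3 : Fin nq → Fin mq → H),
      (∀ i, (Algebra.TensorProduct.map (AlgHom.id k H) Q.comul) (Q.comul (Xq1 i))
          = ∑ j, A1 i j ⊗ₜ[k] (A2 i j ⊗ₜ[k] A3 i j)) →
    ∀ (nt : ℕ) (t1 t2 t3 : Fin nt → H),
      Q.PhiInv = ∑ i, t1 i ⊗ₜ[k] (t2 i ⊗ₜ[k] t3 i) →
    ∀ (mt : ℕ) (t21 t22 : Fin nt → Fin mt → H),
      (∀ i, Q.comul (t2 i) = ∑ j, t21 i j ⊗ₜ[k] t22 i j) →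
    ∀ (nz : ℕ) (z1 z2 z3 : Fin nz → H),
      Q.PhiInv = ∑ i, z1 i ⊗ₜ[k] (z2 i ⊗ₜ[k] z3 i) →
    ∀ (nx : ℕ) (x1 x2 x3 : Fin nx → H),
      Q.PhiInv = ∑ i, x1 i ⊗ₜ[k] (x2 i ⊗ₜ[k] x3 i) →
    (∑ i, ∑ j, ∑ it, ∑ jt, ∑ iz, ∑ ix,
      (A1 i j * t1 it * x1 ix)
        ⊗ₜ[k] ((A2 i j * t21 it jt * z1 iz * x2 ix)
          ⊗ₜ[k] (A3 i j * t22 it jt * z2 iz * Q.beta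
            * Q.S (Q.Sinv (Q.alpha * Xq3 i) * Xq2 i * t3 it * z3 iz) * x3 ix)))
      = (1 : H ⊗[k] (H ⊗[k] H)) := by
  intro nq X1 X2 X3 hX mq A1 A2 A3 hA nt t1 t2 t3 ht mt t21 t22 ht2 nz z1 z2 z3 hz nx x1 x2 x3 hx
  rw [← QHaux.main_aux Q nq X1 X2 X3 hX]
  refine Finset.sum_congr rfl fun i _ => ?_
  have hB : QHaux.B Q.toQuasiBialgebra Q.PhiInv
      = ∑ it, ∑ jt, t1 it ⊗ₜ[k] (t21 it jt ⊗ₜ[k] (t22 it jt ⊗ₜ[k] t3 it)) := by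
    rw [ht, map_sum]
    refine Finset.sum_congr rfl fun it _ => ?_
    simp [QHaux.B, ht2, TensorProduct.sum_tmul, TensorProduct.tmul_sum]
  have hAz : QHaux.A Q.PhiInv
      = ∑ iz, (1 : H) ⊗ₜ[k] (z1 iz ⊗ₜ[k] (z2 iz ⊗ₜ[k] z3 iz)) := by
    rw [hz, map_sum]
    rfl
  have hDR : QHaux.DR Q.toQuasiBialgebra (Q.comul (X1 i)) = _ := hA i
  generalize QHaux.B Q.toQuasiBialgebra Q.PhiInv = Y at hB ⊢
  generalize QHaux.A Q.PhiInv = Z at hAz ⊢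
  generalize Q.PhiInv = P at hx
  rw [hDR]
  simp only [Finset.sum_mul]
  refine Finset.sum_congr rfl fun j _ => ?_
  rw [hB]
  set_option synthInstance.maxHeartbeats 400000 in
  set_option maxSynthPendingDepth 8 in
  simp only [Finset.sum_mul, Finset.mul_sum, map_sum]
  refine Finset.sum_congr rfl fun it _ => ?_
  refine Finset.sum_congr rfl fun jt _ => ?_
  rw [hAz]
  set_option synthInstance.maxHeartbeats 400000 in
  set_option maxSynthPendingDepth 8 in
  simp only [Finset.sum_mul, Finset.mul_sum, map_sum]
  refine Finset.sum_congr rfl fun iz _ => ?_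
  rw [hx, Finset.mul_sum]
  refine Finset.sum_congr rfl fun ix _ => ?_
  set_option synthInstance.maxHeartbeats 400000 in
  set_option maxSynthPendingDepth 8 in
  simp [QHaux.N4, Q.S_mul, Q.S_Sinv, mul_assoc]
end
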